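/- arXiv:1711.05924 — 7 statements merged into one kernel-verified Lean document; each statement's English description precedes it below -/
import Mathlib

section
/- For every integer n ≥ 1 there exists a divisor d of n with d^4 ≤ n such that τ(n) ≤ 8·τ(d)^7. -/
open ArithmeticFunction in
lemma tau_le_two_pow (n : ℕ) : n ≠ 0 → n.divisors.card ≤ 2 ^ (cardFactors n) := by
  induction n using induction_on_primes with
  | zero => intro h; exact absurd rfl h
  | one => intro _; simp
  | prime_mul p a hp ih =>
    intro h
    have ha : a ≠ 0 := right_ne_zero_of_mul h
    rw [cardFactors_mul hp.ne_zero ha, cardFactors_apply_prime hp, pow_add, pow_one]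
    open scoped Pointwise in
    have h1 : (p * a).divisors.card ≤ p.divisors.card * a.divisors.card := by
      rw [Nat.divisors_mul]
      exact Finset.card_mul_le
    have h2 : p.divisors.card = 2 := by
      rw [hp.divisors, Finset.card_pair hp.one_lt.ne]
    rw [h2] at h1
    exact h1.trans (Nat.mul_le_mul_left 2 (ih ha))

open ArithmeticFunction in
lemma minFac_pow_le (n : ℕ) (hn : n ≠ 0) : n.minFac ^ (cardFactors n) ≤ n := by
  rw [cardFactors_apply]
  conv_rhs => rw [← Nat.prod_primeFactorsList hn]
  apply List.pow_card_le_prod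
  intro x hx
  exact Nat.minFac_le_of_dvd (Nat.prime_of_mem_primeFactorsList hx).two_le
    (Nat.dvd_of_mem_primeFactorsList hx)

open ArithmeticFunction in
lemma divisor_split (n : ℕ) : n ≠ 0 → ∃ A B d : ℕ, n = A * B ∧ Nat.Coprime A B ∧ d ∣ A ∧
    d ^ 4 ≤ A ∧ A.divisors.card ≤ d.divisors.card ^ 7 ∧ cardFactors B ≤ 3 := by
  induction n using Nat.recOnPrimePow with
  | zero => intro h; exact absurd rfl h
  | one => intro _; exact ⟨1, 1, 1, by simp⟩
  | prime_pow_mul a p k hp hpa hk ih =>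
    intro h
    have ha : a ≠ 0 := right_ne_zero_of_mul h
    obtain ⟨A, B, d, rfl, hAB, hdA, hd4, hτ, hB⟩ := ih ha
    have hB0 : B ≠ 0 := right_ne_zero_of_mul ha
    have hpc : Nat.Coprime (p ^ k) (A * B) :=
      Nat.Coprime.pow_left k ((Nat.Prime.coprime_iff_not_dvd hp).2 hpa)
    have hpA : Nat.Coprime (p ^ k) A := hpc.coprime_mul_right_right
    have hpB : Nat.Coprime (p ^ k) B := hpc.coprime_mul_left_right
    by_cases h4 : 4 ≤ k
    · have hdv : p ^ (k / 4) ∣ p ^ k := pow_dvd_pow p (Nat.div_le_self k 4)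
      refine ⟨p ^ k * A, B, p ^ (k / 4) * d, by ring, hpB.mul_left hAB,
        mul_dvd_mul hdv hdA, ?_, ?_, hB⟩
      · rw [mul_pow, ← pow_mul]
        exact Nat.mul_le_mul (Nat.pow_le_pow_right hp.pos (Nat.div_mul_le_self k 4)) hd4
      · rw [hpA.card_divisors_mul,
          ((hpA.coprime_dvd_left hdv).coprime_dvd_right hdA).card_divisors_mul, mul_pow]
        refine Nat.mul_le_mul ?_ hτ
        rw [Nat.divisors_prime_pow hp, Nat.divisors_prime_pow hp]
        simp only [Finset.card_map, Finset.card_range]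
        have e1 : k + 1 ≤ 4 * (k / 4 + 1) := by omega
        have e2 : 2 ^ 6 ≤ (k / 4 + 1) ^ 6 := Nat.pow_le_pow_left (by omega) 6
        calc k + 1 ≤ 4 * (k / 4 + 1) := e1
          _ ≤ (k / 4 + 1) ^ 6 * (k / 4 + 1) := Nat.mul_le_mul_right _ (by omega)
          _ = _ := by ring
    · have hC0 : p ^ k * B ≠ 0 := mul_ne_zero (pow_ne_zero k hp.ne_zero) hB0
      have hΩ : cardFactors (p ^ k * B) = k + cardFactors B := by
        rw [cardFactors_mul (pow_ne_zero k hp.ne_zero) hB0, cardFactors_apply_prime_pow hp]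
      have hAC : Nat.Coprime A (p ^ k * B) := hpA.symm.mul_right hAB
      by_cases h3 : k + cardFactors B ≤ 3
      · exact ⟨A, p ^ k * B, d, by ring, hAC, hdA, hd4, hτ, by omega⟩
      · have hC1 : p ^ k * B ≠ 1 := by
          intro h1
          rw [h1, cardFactors_one] at hΩ
          omega
        have t1 := tau_le_two_pow _ hC0
        have t2 := minFac_pow_le _ hC0
        have hq := Nat.minFac_prime hC1
        have hqd := Nat.minFac_dvd (p ^ k * B)
        have hEq : p ^ k * (A * B) = A * (p ^ k * B) := by ring
        generalize p ^ k * B = C at *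
        refine ⟨A * C, 1, d * C.minFac, by rw [mul_one]; exact hEq, by simp,
          mul_dvd_mul hdA hqd, ?_, ?_, by simp⟩
        · rw [mul_pow]
          exact Nat.mul_le_mul hd4 ((Nat.pow_le_pow_right hq.pos (by omega)).trans t2)
        · rw [hAC.card_divisors_mul,
            ((hAC.coprime_dvd_left hdA).coprime_dvd_right hqd).card_divisors_mul, mul_pow]
          refine Nat.mul_le_mul hτ ?_
          rw [hq.divisors, Finset.card_pair hq.one_lt.ne]
          exact t1.trans (Nat.pow_le_pow_right (by norm_num) (by omega))

theorem divisor_bound_exists (n : ℕ) (hn : 1 ≤ n) :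
    ∃ d : ℕ, d ∣ n ∧ d ^ 4 ≤ n ∧
      n.divisors.card ≤ 8 * d.divisors.card ^ 7 := by
  obtain ⟨A, B, d, rfl, hAB, hdA, hd4, hτ, hB⟩ := divisor_split n (by omega)
  have hB0 : B ≠ 0 := by rintro rfl; simp at hn
  refine ⟨d, hdA.mul_right B, hd4.trans (Nat.le_mul_of_pos_right A (by omega)), ?_⟩
  rw [hAB.card_divisors_mul, mul_comm]
  exact Nat.mul_le_mul ((tau_le_two_pow B hB0).trans
    (Nat.pow_le_pow_right (n := 2) (by norm_num) hB)) hτ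
end

section
/- For every integer n ≥ 1 one has τ(n) ≤ 8 · ∑_{d | n, d^4 ≤ n} τ(d)^7, where the sum runs over all positive divisors d of n with d^4 ≤ n. -/
lemma tau_mul_le (a b : ℕ) :
    (a * b).divisors.card ≤ a.divisors.card * b.divisors.card := by
  rw [Nat.divisors_mul]
  exact Finset.card_mul_le

lemma tau_prod_le (M : ℕ) (l : List ℕ) (h : ∀ x ∈ l, x.divisors.card ≤ M) :
    l.prod.divisors.card ≤ M ^ l.length := by
  induction l with
  | nil => simp
  | cons a l ih =>
    rw [List.prod_cons, List.length_cons, pow_succ']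
    exact (tau_mul_le _ _).trans
      (Nat.mul_le_mul (h a (by simp)) (ih fun x hx => h x (by simp [hx])))

lemma split_list (N : ℕ) (l : List ℕ) (h : ∀ x ∈ l, x.Prime) :
    ∃ l1 l2 : List ℕ, l.prod = l1.prod * l2.prod ∧ (∀ x ∈ l1, 0 < x ∧ x ^ 4 ≤ N) ∧
      (∀ x ∈ l2, x.Prime ∧ N < x ^ 4) := by
  induction l with
  | nil => exact ⟨[], [], by simp⟩
  | cons a l ih =>
    obtain ⟨l1, l2, h0, h1, h2⟩ := ih fun x hx => h x (by simp [hx])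
    have ha := h a (by simp)
    by_cases hN : a ^ 4 ≤ N
    · refine ⟨a :: l1, l2, by simp [h0, mul_assoc], ?_, h2⟩
      intro x hx
      rcases List.mem_cons.1 hx with rfl | hx
      · exact ⟨ha.pos, hN⟩
      · exact h1 x hx
    · refine ⟨l1, a :: l2, by simp [h0, mul_left_comm], h1, ?_⟩
      intro x hx
      rcases List.mem_cons.1 hx with rfl | hx
      · exact ⟨ha, not_le.1 hN⟩
      · exact h2 x hx

lemma four_big (N A B C D : ℕ) (hA : N < A ^ 4) (hB : N < B ^ 4) (hC : N < C ^ 4)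
    (hD : N < D ^ 4) (h : A * B * C * D ≤ N) : False := by
  have h1 : N ^ 4 < (A * B * C * D) ^ 4 := by
    calc N ^ 4 = N * N * N * N := by ring
      _ < A ^ 4 * B ^ 4 * C ^ 4 * D ^ 4 := by gcongr
      _ = _ := by ring
  exact absurd (Nat.pow_le_pow_left h 4) (not_le.2 h1)

lemma merge_list (N : ℕ) : ∀ (k : ℕ) (l : List ℕ), l.length ≤ k →
    (∀ x ∈ l, 0 < x ∧ x ^ 4 ≤ N) → l.prod ≤ N →
    ∃ l' : List ℕ, l'.prod = l.prod ∧ l'.length ≤ 7 ∧ ∀ x ∈ l', x ^ 4 ≤ N := by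
  intro k
  induction k with
  | zero =>
    intro l hl h _
    exact ⟨l, rfl, by omega, fun x hx => (h x hx).2⟩
  | succ k ih =>
    intro l hl h hp
    match l, hl, h, hp with
    | a :: b :: c :: d :: e :: f :: g :: i :: t, hl, h, hp =>
      simp only [List.length_cons] at hl
      simp only [List.mem_cons, forall_eq_or_imp] at h
      obtain ⟨ha, hb, hc, hd, he, hf, hg, hi, ht⟩ := h
      have step : ∀ l2 : List ℕ, l2.length ≤ k → (∀ x ∈ l2, 0 < x ∧ x ^ 4 ≤ N) →
          l2.prod = (a :: b :: c :: d :: e :: f :: g :: i :: t).prod →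
          ∃ l' : List ℕ, l'.prod = (a :: b :: c :: d :: e :: f :: g :: i :: t).prod ∧
            l'.length ≤ 7 ∧ ∀ x ∈ l', x ^ 4 ≤ N := by
        intro l2 h1 h2 h3
        rw [← h3]
        exact ih l2 h1 h2 (h3 ▸ hp)
      by_cases h1 : (a * b) ^ 4 ≤ N
      · refine step ((a * b) :: c :: d :: e :: f :: g :: i :: t)
          (by simp only [List.length_cons]; omega) ?_ (by simp only [List.prod_cons]; ring)
        simp only [List.mem_cons, forall_eq_or_imp]
        exact ⟨⟨Nat.mul_pos ha.1 hb.1, h1⟩, hc, hd, he, hf, hg, hi, ht⟩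
      by_cases h2 : (c * d) ^ 4 ≤ N
      · refine step ((c * d) :: a :: b :: e :: f :: g :: i :: t)
          (by simp only [List.length_cons]; omega) ?_ (by simp only [List.prod_cons]; ring)
        simp only [List.mem_cons, forall_eq_or_imp]
        exact ⟨⟨Nat.mul_pos hc.1 hd.1, h2⟩, ha, hb, he, hf, hg, hi, ht⟩
      by_cases h3 : (e * f) ^ 4 ≤ N
      · refine step ((e * f) :: a :: b :: c :: d :: g :: i :: t)
          (by simp only [List.length_cons]; omega) ?_ (by simp only [List.prod_cons]; ring)
        simp only [List.mem_cons, forall_eq_or_imp]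
        exact ⟨⟨Nat.mul_pos he.1 hf.1, h3⟩, ha, hb, hc, hd, hg, hi, ht⟩
      by_cases h4 : (g * i) ^ 4 ≤ N
      · refine step ((g * i) :: a :: b :: c :: d :: e :: f :: t)
          (by simp only [List.length_cons]; omega) ?_ (by simp only [List.prod_cons]; ring)
        simp only [List.mem_cons, forall_eq_or_imp]
        exact ⟨⟨Nat.mul_pos hg.1 hi.1, h4⟩, ha, hb, hc, hd, he, hf, ht⟩
      exfalso
      refine four_big N _ _ _ _ (not_le.1 h1) (not_le.1 h2) (not_le.1 h3) (not_le.1 h4) ?_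
      have htp : 0 < t.prod := List.prod_pos fun x hx => (ht x hx).1
      refine le_trans (Nat.le_mul_of_pos_right _ htp) (le_trans (le_of_eq ?_) hp)
      simp only [List.prod_cons]
      ring
    | [], hl, h, hp => exact ⟨_, rfl, by simp, fun x hx => (h x hx).2⟩
    | [_], hl, h, hp => exact ⟨_, rfl, by simp, fun x hx => (h x hx).2⟩
    | [_, _], hl, h, hp => exact ⟨_, rfl, by simp, fun x hx => (h x hx).2⟩
    | [_, _, _], hl, h, hp => exact ⟨_, rfl, by simp, fun x hx => (h x hx).2⟩
    | [_, _, _, _], hl, h, hp => exact ⟨_, rfl, by simp, fun x hx => (h x hx).2⟩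
    | [_, _, _, _, _], hl, h, hp => exact ⟨_, rfl, by simp, fun x hx => (h x hx).2⟩
    | [_, _, _, _, _, _], hl, h, hp => exact ⟨_, rfl, by simp, fun x hx => (h x hx).2⟩
    | [_, _, _, _, _, _, _], hl, h, hp => exact ⟨_, rfl, by simp, fun x hx => (h x hx).2⟩

lemma large_length (N : ℕ) (l : List ℕ) (h : ∀ x ∈ l, x.Prime ∧ N < x ^ 4)
    (hp : l.prod ≤ N) : l.length ≤ 3 := by
  match l, h, hp with
  | a :: b :: c :: d :: t, h, hp =>
    exfalso
    simp only [List.mem_cons, forall_eq_or_imp] at h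
    obtain ⟨ha, hb, hc, hd, ht⟩ := h
    refine four_big N a b c d ha.2 hb.2 hc.2 hd.2 ?_
    have htp : 0 < t.prod := List.prod_pos fun x hx => (ht x hx).1.pos
    refine le_trans (Nat.le_mul_of_pos_right _ htp) (le_trans (le_of_eq ?_) hp)
    simp only [List.prod_cons]
    ring
  | [], _, _ => simp
  | [_], _, _ => simp
  | [_, _], _, _ => simp
  | [_, _, _], _, _ => simp

theorem divisor_sum_bound (n : ℕ) (hn : 1 ≤ n) :
    n.divisors.card ≤
      8 * ∑ d ∈ n.divisors.filter (fun d => d ^ 4 ≤ n), d.divisors.card ^ 7 := by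
  have hn0 : n ≠ 0 := by omega
  obtain ⟨l1, l2, h0, h1, h2⟩ := split_list n n.primeFactorsList
    (fun x hx => Nat.prime_of_mem_primeFactorsList hx)
  rw [Nat.prod_primeFactorsList hn0] at h0
  have d1 : l1.prod ∣ n := ⟨_, h0⟩
  have d2 : l2.prod ∣ n := ⟨l1.prod, by rw [mul_comm]; exact h0⟩
  obtain ⟨l, e1, e2, e3⟩ := merge_list n _ l1 le_rfl h1 (Nat.le_of_dvd hn d1)
  have e4 := large_length n l2 h2 (Nat.le_of_dvd hn d2)
  obtain ⟨m, hm, hmax⟩ := Finset.exists_max_image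
    (n.divisors.filter (fun d => d ^ 4 ≤ n)) (fun d => d.divisors.card)
    ⟨1, by simp [hn0, hn]⟩
  have hm0 : 0 < m.divisors.card := by
    have := hmax 1 (by simp [hn0, hn])
    simpa using this
  have t1 : l1.prod.divisors.card ≤ m.divisors.card ^ 7 := by
    rw [← e1]
    refine (tau_prod_le m.divisors.card l fun x hx => hmax x ?_).trans
      (Nat.pow_le_pow_right hm0 e2)
    rw [Finset.mem_filter, Nat.mem_divisors]
    exact ⟨⟨((List.dvd_prod hx).trans (e1 ▸ dvd_rfl)).trans d1, hn0⟩, e3 x hx⟩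
  have t2 : l2.prod.divisors.card ≤ 8 := by
    refine (tau_prod_le 2 l2 fun x hx => ?_).trans
      (Nat.pow_le_pow_right (by norm_num) e4)
    rw [(h2 x hx).1.divisors]
    exact Finset.card_le_two
  have t3 : m.divisors.card ^ 7 ≤
      ∑ d ∈ n.divisors.filter (fun d => d ^ 4 ≤ n), d.divisors.card ^ 7 :=
    Finset.single_le_sum (f := fun d : ℕ => d.divisors.card ^ 7)
      (fun _ _ => Nat.zero_le _) hm
  calc n.divisors.card = (l1.prod * l2.prod).divisors.card := by rw [← h0]
    _ ≤ l1.prod.divisors.card * l2.prod.divisors.card := tau_mul_le _ _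
    _ ≤ m.divisors.card ^ 7 * 8 := Nat.mul_le_mul t1 t2
    _ = 8 * m.divisors.card ^ 7 := mul_comm _ _
    _ ≤ _ := Nat.mul_le_mul_left 8 t3
end

section
/- Let n = p₁^{a₁} p₂^{a₂} ⋯ p_t^{a_t} where p₁, …, p_t are distinct primes, t ≥ 1, and a_i ≥ 4 for all 1 ≤ i ≤ t. Then there exists a divisor d of n with d^4 ≤ n such that 2^t · τ(n) ≤ τ(d)^4 (equivalently τ(n) ≤ 2^{-t} τ(d)^4). -/
lemma card_divisors_prod_aux (p b : ℕ → ℕ) (s : Finset ℕ)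
    (hp : ∀ i ∈ s, (p i).Prime)
    (hdist : ∀ i ∈ s, ∀ j ∈ s, i ≠ j → p i ≠ p j) :
    (∏ i ∈ s, p i ^ b i).divisors.card = ∏ i ∈ s, (b i + 1) := by
  induction s using Finset.induction_on with
  | empty => simp
  | insert k s hk ih =>
    rw [Finset.prod_insert hk, Finset.prod_insert hk, Nat.Coprime.card_divisors_mul, ih]
    · rw [Nat.divisors_prime_pow (hp k (Finset.mem_insert_self k s))]
      simp
    · exact fun i hi => hp i (Finset.mem_insert_of_mem hi)
    · exact fun i hi j hj => hdist i (Finset.mem_insert_of_mem hi) j (Finset.mem_insert_of_mem hj)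
    · apply Nat.Coprime.prod_right
      intro i hi
      apply Nat.Coprime.pow
      have hki : k ≠ i := fun h => hk (h ▸ hi)
      exact (Nat.coprime_primes (hp k (Finset.mem_insert_self k s))
        (hp i (Finset.mem_insert_of_mem hi))).2
        (hdist k (Finset.mem_insert_self k s) i (Finset.mem_insert_of_mem hi) hki)

theorem high_exponent_case (t : ℕ) (ht : 1 ≤ t) (p : ℕ → ℕ) (a : ℕ → ℕ)
    (hp : ∀ i ∈ Finset.Icc 1 t, (p i).Prime)
    (hdist : ∀ i ∈ Finset.Icc 1 t, ∀ j ∈ Finset.Icc 1 t, i ≠ j → p i ≠ p j)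
    (ha : ∀ i ∈ Finset.Icc 1 t, 4 ≤ a i)
    (n : ℕ) (hn : n = ∏ i ∈ Finset.Icc 1 t, p i ^ a i) :
    ∃ d : ℕ, d ∣ n ∧ d ^ 4 ≤ n ∧
      2 ^ t * n.divisors.card ≤ d.divisors.card ^ 4 := by
  subst hn
  refine ⟨∏ i ∈ Finset.Icc 1 t, p i ^ (a i / 4), ?_, ?_, ?_⟩
  · exact Finset.prod_dvd_prod_of_dvd _ _ fun i _ => pow_dvd_pow _ (Nat.div_le_self _ _)
  · rw [← Finset.prod_pow]
    apply Finset.prod_le_prod' 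
    intro i hi
    rw [← pow_mul]
    exact Nat.pow_le_pow_right (hp i hi).pos (Nat.div_mul_le_self _ _)
  · rw [card_divisors_prod_aux p a _ hp hdist,
      card_divisors_prod_aux p (fun i => a i / 4) _ hp hdist, ← Finset.prod_pow]
    have h2 : 2 ^ t = ∏ i ∈ Finset.Icc 1 t, 2 := by simp
    rw [h2, ← Finset.prod_mul_distrib]
    apply Finset.prod_le_prod'
    intro i hi
    have h4 := ha i hi
    have hb : 2 ≤ a i / 4 + 1 := by omega
    have hc : a i + 1 ≤ 4 * (a i / 4 + 1) := by omega
    have h3 : 2 ^ 3 ≤ (a i / 4 + 1) ^ 3 := Nat.pow_le_pow_left hb 3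
    calc 2 * (a i + 1) ≤ 2 ^ 3 * (a i / 4 + 1) := by omega
      _ ≤ (a i / 4 + 1) ^ 3 * (a i / 4 + 1) := Nat.mul_le_mul_right _ h3
      _ = (a i / 4 + 1) ^ 4 := by ring
end

section
/- Let n = p₁p₂⋯p_t be squarefree with distinct primes p₁ < p₂ < ⋯ < p_t. If 1 ≤ t ≤ 3, then there exists a divisor d of n with d^4 ≤ n such that τ(n) ≤ 2^t·τ(d). If t ≥ 4, then there exists a divisor d of n with d^4 ≤ n such that τ(n) ≤ τ(d)^7. -/
theorem sf_tau (t : ℕ) (p : ℕ → ℕ)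
    (hp : ∀ i ∈ Finset.Icc 1 t, (p i).Prime)
    (hmono : ∀ i j, 1 ≤ i → i < j → j ≤ t → p i < p j) (m : ℕ) (hm : m ≤ t) :
    (∏ i ∈ Finset.Icc 1 m, p i).divisors.card = 2 ^ m := by
  induction m with
  | zero => simp
  | succ k ih =>
    have hk : (p (k+1)).Prime := hp _ (Finset.mem_Icc.2 ⟨by omega, hm⟩)
    rw [Finset.prod_Icc_succ_top (by omega), Nat.Coprime.card_divisors_mul, ih (by omega),
      hk.divisors, Finset.card_pair hk.one_lt.ne, pow_succ]
    refine Nat.Coprime.prod_left fun i hi => ?_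
    rw [Finset.mem_Icc] at hi
    exact (Nat.coprime_primes (hp i (Finset.mem_Icc.2 ⟨hi.1, by omega⟩)) hk).2
      (hmono i (k+1) hi.1 (by omega) hm).ne

theorem sf_pow (t : ℕ) (p : ℕ → ℕ)
    (hmono : ∀ i j, 1 ≤ i → i < j → j ≤ t → p i < p j) (k : ℕ) (hk : 4 * k ≤ t) :
    (∏ i ∈ Finset.Icc 1 k, p i) ^ 4 ≤ ∏ i ∈ Finset.Icc 1 (4 * k), p i := by
  induction k with
  | zero => simp
  | succ k ih =>
    have key : ∀ j, k + 1 ≤ j → j ≤ t → p (k+1) ≤ p j := by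
      intro j h1 h2
      rcases h1.eq_or_lt with h | h
      · rw [h]
      · exact (hmono _ _ (by omega) h h2).le
    have h1 := key (4*k+1) (by omega) (by omega)
    have h2 := key (4*k+1+1) (by omega) (by omega)
    have h3 := key (4*k+1+1+1) (by omega) (by omega)
    have h4 := key (4*k+1+1+1+1) (by omega) (by omega)
    have ih := ih (by omega)
    rw [show 4 * (k+1) = 4*k+1+1+1+1 by ring]
    iterate 5 rw [Finset.prod_Icc_succ_top (by omega)]
    calc _ = (∏ i ∈ Finset.Icc 1 k, p i)^4 * p (k+1) * p (k+1) * p (k+1) * p (k+1) := by ring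
      _ ≤ _ := by gcongr

theorem squarefree_case (t : ℕ) (p : ℕ → ℕ)
    (hp : ∀ i ∈ Finset.Icc 1 t, (p i).Prime)
    (hmono : ∀ i j, 1 ≤ i → i < j → j ≤ t → p i < p j)
    (n : ℕ) (hn : n = ∏ i ∈ Finset.Icc 1 t, p i) :
    (1 ≤ t → t ≤ 3 → ∃ d : ℕ, d ∣ n ∧ d ^ 4 ≤ n ∧
      n.divisors.card ≤ 2 ^ t * d.divisors.card) ∧
    (4 ≤ t → ∃ d : ℕ, d ∣ n ∧ d ^ 4 ≤ n ∧
      n.divisors.card ≤ d.divisors.card ^ 7) := by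
  have hpos : 0 < n := by
    rw [hn]; exact Finset.prod_pos fun i hi => (hp i hi).pos
  have htau : n.divisors.card = 2 ^ t := by rw [hn]; exact sf_tau t p hp hmono t le_rfl
  have hdvd : ∀ m, m ≤ t → (∏ i ∈ Finset.Icc 1 m, p i) ∣ n := by
    intro m hm
    rw [hn]
    exact Finset.prod_dvd_prod_of_subset _ _ _ (Finset.Icc_subset_Icc_right hm)
  constructor
  · intro _ _
    exact ⟨1, one_dvd _, by rw [one_pow]; exact hpos, by simp [htau]⟩
  · intro ht
    refine ⟨∏ i ∈ Finset.Icc 1 (t/4), p i, hdvd _ (by omega), ?_, ?_⟩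
    · exact (sf_pow t p hmono (t/4) (by omega)).trans
        (Nat.le_of_dvd hpos (hdvd _ (by omega)))
    · rw [htau, sf_tau t p hp hmono _ (by omega), ← pow_mul]
      exact Nat.pow_le_pow_right (by norm_num) (by omega)
end

section
/- Let n = p₁²p₂²⋯p_t² with distinct primes p₁ < p₂ < ⋯ < p_t. If t = 1, there exists a divisor d of n with d^4 ≤ n such that τ(n) ≤ 3·τ(d). If t ∈ {2, 3}, there exists a divisor d of n with d^4 ≤ n such that 2²·τ(n) ≤ τ(d)^7. If t ≥ 4, there exists a divisor d of n with d^4 ≤ n such that τ(n) ≤ τ(d)^7. -/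
theorem aux_card (s : Finset ℕ) (p : ℕ → ℕ) (e : ℕ) (hp : ∀ i ∈ s, (p i).Prime)
    (hinj : ∀ i ∈ s, ∀ j ∈ s, i ≠ j → p i ≠ p j) :
    (∏ i ∈ s, p i ^ e).divisors.card = (e + 1) ^ s.card := by
  induction s using Finset.induction_on with
  | empty => simp
  | insert a s ha ih =>
    rw [Finset.prod_insert ha, Finset.card_insert_of_notMem ha, Nat.Coprime.card_divisors_mul,
      ih (fun i hi => hp i (Finset.mem_insert_of_mem hi))
        (fun i hi j hj => hinj i (Finset.mem_insert_of_mem hi) j (Finset.mem_insert_of_mem hj)),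
      Nat.divisors_prime_pow (hp a (Finset.mem_insert_self a s))]
    · simp [pow_succ, mul_comm]
    · apply Nat.Coprime.prod_right
      intro i hi
      apply Nat.Coprime.pow
      rw [Nat.coprime_primes (hp a (Finset.mem_insert_self a s))
        (hp i (Finset.mem_insert_of_mem hi))]
      exact hinj a (Finset.mem_insert_self a s) i (Finset.mem_insert_of_mem hi)
        (fun h => ha (h ▸ hi))

theorem aux_main (t : ℕ) (p : ℕ → ℕ)
    (hp : ∀ i ∈ Finset.Icc 1 t, (p i).Prime)
    (hmono : ∀ i j, 1 ≤ i → i < j → j ≤ t → p i < p j)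
    (n : ℕ) (hn : n = ∏ i ∈ Finset.Icc 1 t, p i ^ 2) (k : ℕ) (hk : 2 * k ≤ t) :
    n.divisors.card = 3 ^ t ∧ ∃ d : ℕ, d ∣ n ∧ d ^ 4 ≤ n ∧ d.divisors.card = 2 ^ k := by
  have hinj : ∀ i ∈ Finset.Icc 1 t, ∀ j ∈ Finset.Icc 1 t, i ≠ j → p i ≠ p j := by
    intro i hi j hj hij
    rw [Finset.mem_Icc] at hi hj
    rcases lt_or_gt_of_ne hij with h | h
    · exact (hmono i j hi.1 h hj.2).ne
    · exact (hmono j i hj.1 h hi.2).ne'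
  have hsub : Finset.Icc 1 k ⊆ Finset.Icc 1 t := Finset.Icc_subset_Icc_right (by omega)
  refine ⟨by rw [hn, aux_card _ p 2 hp hinj]; simp, ∏ i ∈ Finset.Icc 1 k, p i ^ 1, ?_, ?_, ?_⟩
  · rw [hn]
    exact (Finset.prod_dvd_prod_of_dvd _ _ fun i _ => pow_dvd_pow _ (by norm_num)).trans
      (Finset.prod_dvd_prod_of_subset _ _ _ hsub)
  · have hdisj : Disjoint (Finset.Icc 1 k) ((Finset.Icc 1 k).map (addRightEmbedding k)) := by
      rw [Finset.map_add_right_Icc, Finset.disjoint_left]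
      intro a ha hb
      rw [Finset.mem_Icc] at ha hb
      omega
    have hsub2 : Finset.Icc 1 k ∪ (Finset.Icc 1 k).map (addRightEmbedding k)
        ⊆ Finset.Icc 1 t := by
      rw [Finset.map_add_right_Icc]
      intro a ha
      rw [Finset.mem_union, Finset.mem_Icc, Finset.mem_Icc] at ha
      rw [Finset.mem_Icc]
      omega
    calc (∏ i ∈ Finset.Icc 1 k, p i ^ 1) ^ 4
        = (∏ i ∈ Finset.Icc 1 k, p i ^ 2) * ∏ i ∈ Finset.Icc 1 k, p i ^ 2 := by
          rw [← Finset.prod_mul_distrib, ← Finset.prod_pow]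
          exact Finset.prod_congr rfl fun i _ => by ring
      _ ≤ (∏ i ∈ Finset.Icc 1 k, p i ^ 2) * ∏ i ∈ Finset.Icc 1 k, p (i + k) ^ 2 := by
          refine Nat.mul_le_mul_left _ (Finset.prod_le_prod' fun i hi => ?_)
          rw [Finset.mem_Icc] at hi
          exact Nat.pow_le_pow_left (hmono i (i + k) hi.1 (by omega) (by omega)).le _
      _ = ∏ i ∈ Finset.Icc 1 k ∪ (Finset.Icc 1 k).map (addRightEmbedding k), p i ^ 2 := by
          rw [Finset.prod_union hdisj, Finset.prod_map]
          rfl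
      _ ≤ n := by
          rw [hn]
          refine Finset.prod_le_prod_of_subset_of_one_le' hsub2 fun i hi _ => ?_
          exact Nat.one_le_pow _ _ (hp i hi).pos
  · rw [aux_card _ p 1 (fun i hi => hp i (hsub hi))
      (fun i hi j hj => hinj i (hsub hi) j (hsub hj))]
    simp

theorem square_case (t : ℕ) (p : ℕ → ℕ)
    (hp : ∀ i ∈ Finset.Icc 1 t, (p i).Prime)
    (hmono : ∀ i j, 1 ≤ i → i < j → j ≤ t → p i < p j)
    (n : ℕ) (hn : n = ∏ i ∈ Finset.Icc 1 t, p i ^ 2) :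
    (t = 1 → ∃ d : ℕ, d ∣ n ∧ d ^ 4 ≤ n ∧
      n.divisors.card ≤ 3 * d.divisors.card) ∧
    (t = 2 ∨ t = 3 → ∃ d : ℕ, d ∣ n ∧ d ^ 4 ≤ n ∧
      2 ^ 2 * n.divisors.card ≤ d.divisors.card ^ 7) ∧
    (4 ≤ t → ∃ d : ℕ, d ∣ n ∧ d ^ 4 ≤ n ∧
      n.divisors.card ≤ d.divisors.card ^ 7) := by
  obtain ⟨h1, d, hd, hd4, h2⟩ := aux_main t p hp hmono n hn (t / 2) (by omega)
  refine ⟨fun ht => ⟨d, hd, hd4, ?_⟩, fun ht => ⟨d, hd, hd4, ?_⟩, fun ht => ⟨d, hd, hd4, ?_⟩⟩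
  · rw [h1, h2, ht]; norm_num
  · rw [h1, h2]
    rcases ht with rfl | rfl <;> norm_num
  · rw [h1, h2]
    calc 3 ^ t ≤ 3 ^ (3 * (t / 2)) := Nat.pow_le_pow_right (by norm_num) (by omega)
      _ = 27 ^ (t / 2) := by rw [pow_mul]; norm_num
      _ ≤ 128 ^ (t / 2) := Nat.pow_le_pow_left (by norm_num) _
      _ = (2 ^ (t / 2)) ^ 7 := by rw [← pow_mul, mul_comm, pow_mul]; norm_num
end

section
/- Let n = p₁³p₂³⋯p_t³ with distinct primes p₁ < p₂ < ⋯ < p_t. If t = 1, there exists a divisor d of n with d^4 ≤ n such that τ(n) ≤ 4·τ(d). If t = 2, there exists a divisor d of n with d^4 ≤ n such that 2³·τ(n) ≤ τ(d)^7. If t = 3, there exists a divisor d of n with d^4 ≤ n such that 2⁵·τ(n) ≤ τ(d)^7. If t ≥ 4, there exists a divisor d of n with d^4 ≤ n such that τ(n) ≤ τ(d)^7. -/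
theorem cube_case_tau (t : ℕ) (p : ℕ → ℕ)
    (hp : ∀ i ∈ Finset.Icc 1 t, (p i).Prime)
    (hmono : ∀ i j, 1 ≤ i → i < j → j ≤ t → p i < p j) (e k : ℕ) (hk : k ≤ t) :
    (∏ i ∈ Finset.Icc 1 k, p i ^ e).divisors.card = (e + 1) ^ k := by
  induction k with
  | zero => simp
  | succ k ih =>
    have hpk : (p (k + 1)).Prime := hp _ (Finset.mem_Icc.2 ⟨by omega, hk⟩)
    rw [Finset.prod_Icc_succ_top (by omega), Nat.Coprime.card_divisors_mul, ih (by omega),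
      Nat.divisors_prime_pow hpk, pow_succ]
    · simp
    · apply Nat.Coprime.prod_left
      intro i hi
      rw [Finset.mem_Icc] at hi
      apply Nat.Coprime.pow
      rw [Nat.coprime_primes (hp i (Finset.mem_Icc.2 ⟨hi.1, by omega⟩)) hpk]
      exact (hmono i (k + 1) hi.1 (by omega) hk).ne

theorem cube_case_le (t : ℕ) (p : ℕ → ℕ)
    (hp : ∀ i ∈ Finset.Icc 1 t, (p i).Prime)
    (hmono : ∀ i j, 1 ≤ i → i < j → j ≤ t → p i < p j) (k : ℕ) (hk : 2 * k ≤ t) :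
    (∏ i ∈ Finset.Icc 1 k, p i ^ 1) ^ 4 ≤ ∏ i ∈ Finset.Icc 1 (2 * k), p i ^ 3 := by
  induction k with
  | zero => simp
  | succ k ih =>
    rw [show 2 * (k + 1) = 2 * k + 1 + 1 by ring, Finset.prod_Icc_succ_top (by omega),
      Finset.prod_Icc_succ_top (by omega), Finset.prod_Icc_succ_top (by omega), mul_pow, mul_assoc]
    apply Nat.mul_le_mul (ih (by omega))
    have h1 : p (k + 1) ≤ p (2 * k + 1) := by
      rcases Nat.eq_zero_or_pos k with h | h
      · simp [h]
      · exact (hmono _ _ (by omega) (by omega) (by omega)).le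
    have h2 : p (2 * k + 1) ≤ p (2 * k + 1 + 1) :=
      (hmono _ _ (by omega) (by omega) (by omega)).le
    have h0 : 1 ≤ p (k + 1) := (hp _ (Finset.mem_Icc.2 ⟨by omega, by omega⟩)).one_le
    calc (p (k + 1) ^ 1) ^ 4 = p (k + 1) ^ 4 := by ring
      _ ≤ p (k + 1) ^ 6 := Nat.pow_le_pow_right h0 (by omega)
      _ = p (k + 1) ^ 3 * p (k + 1) ^ 3 := by ring
      _ ≤ _ := Nat.mul_le_mul (Nat.pow_le_pow_left h1 3) (Nat.pow_le_pow_left (h1.trans h2) 3)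

theorem cube_case_half (t : ℕ) (p : ℕ → ℕ)
    (hp : ∀ i ∈ Finset.Icc 1 t, (p i).Prime)
    (hmono : ∀ i j, 1 ≤ i → i < j → j ≤ t → p i < p j) :
    ∃ d : ℕ, d ∣ (∏ i ∈ Finset.Icc 1 t, p i ^ 3) ∧ d ^ 4 ≤ (∏ i ∈ Finset.Icc 1 t, p i ^ 3) ∧
      d.divisors.card = 2 ^ (t / 2) := by
  refine ⟨∏ i ∈ Finset.Icc 1 (t / 2), p i ^ 1, ?_, ?_, ?_⟩
  · refine (Finset.prod_dvd_prod_of_dvd _ (fun i => p i ^ 3) ?_).trans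
      (Finset.prod_dvd_prod_of_subset _ _ _ (Finset.Icc_subset_Icc_right (by omega)))
    intro i _
    exact pow_dvd_pow _ (by omega)
  · refine (cube_case_le t p hp hmono (t / 2) (by omega)).trans ?_
    apply Nat.le_of_dvd
    · exact Finset.prod_pos fun i hi => pow_pos (hp i hi).pos 3
    · exact Finset.prod_dvd_prod_of_subset _ _ _ (Finset.Icc_subset_Icc_right (by omega))
  · exact cube_case_tau t p hp hmono 1 _ (by omega)

theorem cube_case (t : ℕ) (p : ℕ → ℕ)
    (hp : ∀ i ∈ Finset.Icc 1 t, (p i).Prime)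
    (hmono : ∀ i j, 1 ≤ i → i < j → j ≤ t → p i < p j)
    (n : ℕ) (hn : n = ∏ i ∈ Finset.Icc 1 t, p i ^ 3) :
    (t = 1 → ∃ d : ℕ, d ∣ n ∧ d ^ 4 ≤ n ∧
      n.divisors.card ≤ 4 * d.divisors.card) ∧
    (t = 2 → ∃ d : ℕ, d ∣ n ∧ d ^ 4 ≤ n ∧
      2 ^ 3 * n.divisors.card ≤ d.divisors.card ^ 7) ∧
    (t = 3 → ∃ d : ℕ, d ∣ n ∧ d ^ 4 ≤ n ∧
      2 ^ 5 * n.divisors.card ≤ d.divisors.card ^ 7) ∧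
    (4 ≤ t → ∃ d : ℕ, d ∣ n ∧ d ^ 4 ≤ n ∧
      n.divisors.card ≤ d.divisors.card ^ 7) := by
  have hcard : n.divisors.card = 4 ^ t := by
    rw [hn, cube_case_tau t p hp hmono 3 t le_rfl]
  have hhalf := cube_case_half t p hp hmono
  rw [← hn] at hhalf
  obtain ⟨d, hd, hle, hc⟩ := hhalf
  refine ⟨?_, ?_, ?_, ?_⟩
  · rintro rfl
    exact ⟨d, hd, hle, by rw [hcard, hc]; norm_num⟩
  · rintro rfl
    exact ⟨d, hd, hle, by rw [hcard, hc]; norm_num⟩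
  · rintro rfl
    have hn' : n = p 1 ^ 3 * p 2 ^ 3 * p 3 ^ 3 := by
      rw [hn, Finset.prod_Icc_succ_top (by omega), Finset.prod_Icc_succ_top (by omega)]
      simp
    have h1 : (p 1).Prime := hp 1 (by simp)
    have h12 := hmono 1 2 (by omega) (by omega) (by omega)
    have h13 := hmono 1 3 (by omega) (by omega) (by omega)
    refine ⟨p 1 ^ 2, ?_, ?_, ?_⟩
    · rw [hn', mul_assoc]
      exact (pow_dvd_pow _ (by omega)).mul_right _
    · rw [hn']
      calc (p 1 ^ 2) ^ 4 = p 1 ^ 8 := by ring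
        _ ≤ p 1 ^ 9 := Nat.pow_le_pow_right h1.one_le (by omega)
        _ = p 1 ^ 3 * p 1 ^ 3 * p 1 ^ 3 := by ring
        _ ≤ _ := by gcongr
    · rw [hcard, Nat.divisors_prime_pow h1]
      simp
  · intro ht
    refine ⟨d, hd, hle, ?_⟩
    rw [hcard, hc, ← pow_mul, show 4 = 2 ^ 2 by norm_num, ← pow_mul]
    exact Nat.pow_le_pow_right (by omega) (by omega)
end

section
/- Fix an integer r ≥ 1. There exists a constant C > 0 (depending at most on r) such that the following holds. Let x ≥ 2, let κ be a real number with x^{-1/(4r)} ≤ κ ≤ 1, let D be a real number with √x ≤ D ≤ x^{(r+1)/(2r)}, let (γ_l) be complex numbers with |γ_l| ≤ 1 for all l and γ_l = 0 unless l = k^r for some positive integer k, and let f : [0, ∞) → ℝ be a smooth function with 0 ≤ f ≤ 1, f(t) = 1 for 0 ≤ t ≤ (1-κ)x, and f(t) = 0 for t ≥ x. Define a_n = ∑_{l² + m² = n, l,m ≥ 1, gcd(l,m) = 1} γ_l, A_d(x) = ∑_{n ≤ x, d | n} a_n, and A_d(f) = ∑_{n ≥ 1, d | n} a_n f(n). Then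 ∑_{d ≤ D} |A_d(x) - A_d(f)| ≤ C · κ · x^{(r+1)/(2r)} · (log x)^{128}. -/
lemma gse_card_div_mul_le (a b : ℕ) : (a*b).divisors.card ≤ a.divisors.card * b.divisors.card := by
  rw [Nat.divisors_mul]; exact Finset.card_mul_le

lemma gse_sqf_split (a : ℕ) : Squarefree a → ∃ u v, a = u * v ∧ u.divisors.card ≤ v.divisors.card ∧
    v.divisors.card ≤ 2 * u.divisors.card := by
  induction a using induction_on_primes with
  | zero => intro h; exact absurd h (by simp)
  | one => intro _; exact ⟨1, 1, by simp⟩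
  | prime_mul p a hp ih =>
    intro h
    obtain ⟨hc, _, ha⟩ := Nat.squarefree_mul_iff.1 h
    obtain ⟨u, v, rfl, h1, h2⟩ := ih ha
    refine ⟨v, p * u, by ring, ?_, ?_⟩ <;>
    · rw [Nat.Coprime.card_divisors_mul (Nat.Coprime.coprime_mul_right_right hc), hp.divisors,
        Finset.card_pair hp.one_lt.ne]
      omega

lemma gse_sqf_half (a : ℕ) (ha : Squarefree a) : ∃ d, d ∣ a ∧ d ^ 2 ≤ a ∧
    a.divisors.card ≤ 2 * d.divisors.card ^ 2 := by
  obtain ⟨u, v, rfl, h1, h2⟩ := gse_sqf_split a ha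
  have h := gse_card_div_mul_le u v
  rcases le_total u v with huv | huv
  · exact ⟨u, dvd_mul_right _ _, by nlinarith, by nlinarith⟩
  · exact ⟨v, dvd_mul_left _ _, by nlinarith, by nlinarith⟩

lemma gse_sqf_quarter (a : ℕ) (ha : Squarefree a) : ∃ d, d ∣ a ∧ d ^ 4 ≤ a ∧
    a.divisors.card ≤ 8 * d.divisors.card ^ 4 := by
  obtain ⟨d, h1, h2, h3⟩ := gse_sqf_half a ha
  obtain ⟨e, g1, g2, g3⟩ := gse_sqf_half d (ha.squarefree_of_dvd h1)
  refine ⟨e, g1.trans h1, ?_, ?_⟩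
  · calc e ^ 4 = (e ^ 2) ^ 2 := by ring
      _ ≤ d ^ 2 := by gcongr
      _ ≤ a := h2
  · calc _ ≤ _ := h3
      _ ≤ 2 * (2 * e.divisors.card ^ 2) ^ 2 := by gcongr
      _ = _ := by ring

lemma gse_small_div (n : ℕ) (hn : 0 < n) : ∃ a b c : ℕ, a * b * c ∣ n ∧ (a * b * c) ^ 4 ≤ n ∧
    n.divisors.card ≤ 32 * (a.divisors.card ^ 4 * b.divisors.card ^ 4 * c.divisors.card ^ 4) := by
  obtain ⟨a, b, hab, ha⟩ := Nat.sq_mul_squarefree n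
  obtain ⟨c, e, hce, hc⟩ := Nat.sq_mul_squarefree b
  obtain ⟨d1, h1, h2, h3⟩ := gse_sqf_quarter a ha
  obtain ⟨d2, g1, g2, g3⟩ := gse_sqf_half c hc
  subst hce
  subst hab
  refine ⟨d1, d2, e, ?_, ?_, ?_⟩
  · calc d1 * d2 * e ∣ a * c * e := by gcongr
      _ ∣ _ := ⟨e ^ 3 * c, by ring⟩
  · calc (d1 * d2 * e) ^ 4 = d1 ^ 4 * (d2 ^ 2) ^ 2 * e ^ 4 := by ring
      _ ≤ a * c ^ 2 * e ^ 4 := by gcongr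
      _ = _ := by ring
  · have k1 := gse_card_div_mul_le ((e ^ 2 * c) ^ 2) a
    have k2 : ((e ^ 2 * c) ^ 2).divisors.card ≤ (e ^ 2 * c).divisors.card ^ 2 := by
      have h := gse_card_div_mul_le (e ^ 2 * c) (e ^ 2 * c)
      rwa [← sq, ← sq] at h
    have k3 := gse_card_div_mul_le (e ^ 2) c
    have k4 : (e ^ 2).divisors.card ≤ e.divisors.card ^ 2 := by
      rw [sq, sq]; exact gse_card_div_mul_le _ _
    calc _ ≤ _ := k1
      _ ≤ ((e.divisors.card ^ 2 * (2 * d2.divisors.card ^ 2))) ^ 2 * (8 * d1.divisors.card ^ 4) := by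
        refine Nat.mul_le_mul (k2.trans ?_) h3
        gcongr
        exact k3.trans (Nat.mul_le_mul k4 g3)
      _ = _ := by ring

lemma gse_sum_tau_pow (Y j : ℕ) : ∑ d ∈ Finset.Icc 1 Y, (d.divisors.card : ℝ) ^ j / d ≤
    (∑ d ∈ Finset.Icc 1 Y, (1 : ℝ) / d) ^ (2 ^ j) := by
  induction j with
  | zero => simp
  | succ j ih =>
    set g : ℕ → ℝ := fun d => (d.divisors.card : ℝ) ^ j / d with hg
    have hg0 : ∀ d, 0 ≤ g d := fun d => by positivity
    have key : ∑ d ∈ Finset.Icc 1 Y, (d.divisors.card : ℝ) ^ (j + 1) / d ≤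
        ∑ p ∈ Finset.Icc 1 Y ×ˢ Finset.Icc 1 Y, g p.1 * g p.2 := by
      refine le_trans ?_ (Finset.sum_fiberwise_le_sum_of_sum_fiber_nonneg (t := Finset.Icc 1 Y)
        (g := fun p : ℕ × ℕ => p.1 * p.2) (fun y _ => Finset.sum_nonneg fun p _ =>
          mul_nonneg (hg0 _) (hg0 _)))
      refine Finset.sum_le_sum fun d hd => ?_
      rw [Finset.mem_Icc] at hd
      have e1 : (d.divisors.card : ℝ) ^ (j + 1) / d = ∑ p ∈ d.divisorsAntidiagonal,
          (d.divisors.card : ℝ) ^ j / d := by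
        rw [Finset.sum_const, ← Nat.map_div_right_divisors, Finset.card_map, nsmul_eq_mul]; ring
      rw [e1]
      refine (Finset.sum_le_sum (g := fun p : ℕ × ℕ => g p.1 * g p.2) ?_).trans
        (Finset.sum_le_sum_of_subset_of_nonneg ?_ fun _ _ _ => mul_nonneg (hg0 _) (hg0 _))
      · rintro ⟨a, b⟩ hp
        rw [Nat.mem_divisorsAntidiagonal] at hp
        obtain ⟨rfl, hne⟩ := hp
        simp only [hg]
        have := gse_card_div_mul_le a b
        rw [div_mul_div_comm, ← mul_pow]
        push_cast
        gcongr
        exact_mod_cast this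
      · rintro ⟨a, b⟩ hp
        rw [Nat.mem_divisorsAntidiagonal] at hp
        obtain ⟨rfl, hne⟩ := hp
        have ha : 0 < a := Nat.pos_of_ne_zero (left_ne_zero_of_mul hne)
        have hb : 0 < b := Nat.pos_of_ne_zero (right_ne_zero_of_mul hne)
        simp only [Finset.mem_filter, Finset.mem_product, Finset.mem_Icc, and_true]
        refine ⟨⟨ha, ?_⟩, hb, ?_⟩ <;> nlinarith [hd.2]
    refine key.trans ?_
    rw [Finset.sum_product, ← Finset.sum_mul_sum, ← sq, pow_succ 2 j, pow_mul]
    exact pow_le_pow_left₀ (Finset.sum_nonneg fun d _ => hg0 d) ih 2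

lemma gse_sum_tau_log (x : ℝ) (hx : 1 ≤ x) (Y j : ℕ) (hY : (Y : ℝ) ≤ x) :
    ∑ d ∈ Finset.Icc 1 Y, (d.divisors.card : ℝ) ^ j / d ≤ (1 + Real.log x) ^ (2 ^ j) := by
  refine (gse_sum_tau_pow Y j).trans (pow_le_pow_left₀ (by positivity) ?_ _)
  have h := harmonic_le_one_add_log Y
  rw [harmonic_eq_sum_Icc] at h
  push_cast at h
  simp only [one_div]
  refine h.trans ?_
  rcases Nat.eq_zero_or_pos Y with rfl | h0
  · simp [Real.log_nonneg hx]
  · gcongr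

/-- points of pairwise distance at most `H`, with doubles congruent mod `d` -/
lemma gse_card_cong (S : Finset ℕ) (d : ℕ) (hd : 0 < d) (H : ℝ) (hH : 0 ≤ H)
    (h1 : ∀ m ∈ S, ∀ m' ∈ S, (m : ℝ) - m' ≤ H)
    (h2 : ∀ m ∈ S, ∀ m' ∈ S, (d : ℤ) ∣ 2 * ((m : ℤ) - m')) :
    (S.card : ℝ) ≤ 2 * H / d + 1 := by
  rcases S.eq_empty_or_nonempty with rfl | hne
  · simp; positivity
  set m0 := S.min' hne
  have hm0 : m0 ∈ S := S.min'_mem hne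
  have hle : ∀ m ∈ S, m0 ≤ m := fun m hm => S.min'_le m hm
  have hc : S.card ≤ (Finset.range (⌊2 * H / d⌋₊ + 1)).card := by
    refine Finset.card_le_card_of_injOn (fun m => 2 * (m - m0) / d) ?_ ?_
    · intro m hm
      have := hle m hm
      simp only [Finset.coe_range, Set.mem_Iio, Nat.lt_succ_iff]
      refine Nat.le_floor ?_
      refine (Nat.cast_div_le).trans ?_
      push_cast [Nat.cast_sub this]
      gcongr
      exact h1 m hm m0 hm0
    · intro m hm m' hm' h
      simp only at h
      have a1 := hle m hm
      have a2 := hle m' hm'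
      have b1 : d ∣ 2 * (m - m0) := by
        have := h2 m hm m0 hm0
        zify [a1]; exact this
      have b2 : d ∣ 2 * (m' - m0) := by
        have := h2 m' hm' m0 hm0
        zify [a2]; exact this
      obtain ⟨s, hs⟩ := b1
      obtain ⟨t, ht⟩ := b2
      rw [hs, ht, Nat.mul_div_cancel_left _ hd, Nat.mul_div_cancel_left _ hd] at h
      subst h
      omega
  rw [Finset.card_range] at hc
  have := Nat.floor_le (show 0 ≤ 2 * H / d by positivity)
  have hc' : (S.card : ℝ) ≤ (⌊2 * H / d⌋₊ : ℝ) + 1 := by exact_mod_cast hc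
  linarith

lemma gse_root_count (S : Finset ℕ) (l d : ℕ) (hd : 0 < d) (H : ℝ) (hH : 0 ≤ H)
    (h1 : ∀ m ∈ S, ∀ m' ∈ S, (m : ℝ) - m' ≤ H)
    (h2 : ∀ m ∈ S, Nat.gcd l m = 1) (h3 : ∀ m ∈ S, d ∣ l ^ 2 + m ^ 2) :
    (S.card : ℝ) ≤ d.divisors.card * (2 * H / d + 1) := by
  rcases S.eq_empty_or_nonempty with rfl | ⟨m0, hm0⟩
  · simp; positivity
  have hcop : IsCoprime (m0 : ℤ) d := by
    rw [Nat.isCoprime_iff_coprime]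
    have hl : Nat.Coprime l m0 := h2 m0 hm0
    have : Nat.Coprime m0 (l ^ 2 + m0 ^ 2) := by
      rw [sq m0, Nat.coprime_add_mul_right_right]
      exact (hl.pow_left 2).symm
    exact this.coprime_dvd_right (h3 m0 hm0)
  let e : ℕ → ℕ := fun m => Int.gcd ((m : ℤ) - m0) d
  have hmaps : ∀ m ∈ S, e m ∈ d.divisors := by
    intro m _
    rw [Nat.mem_divisors]
    exact ⟨Int.natCast_dvd_natCast.1 (Int.gcd_dvd_right ((m : ℤ) - m0) d), hd.ne'⟩
  rw [Finset.card_eq_sum_card_fiberwise hmaps]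
  push_cast
  rw [← nsmul_eq_mul]
  refine Finset.sum_le_card_nsmul _ _ _ fun b hb => ?_
  refine gse_card_cong _ d hd H hH (fun m hm m' hm' => h1 m (Finset.mem_filter.1 hm).1 m'
    (Finset.mem_filter.1 hm').1) ?_
  have hdec : ∀ m ∈ S.filter (fun m => e m = b), (b : ℤ) ∣ (m : ℤ) - m0 ∧
      ∃ c : ℤ, (d : ℤ) = b * c ∧ c ∣ (m : ℤ) + m0 := by
    intro m hm
    obtain ⟨hmS, rfl⟩ := Finset.mem_filter.1 hm
    refine ⟨Int.gcd_dvd_left _ _, ?_⟩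
    obtain ⟨c, hc⟩ : ((e m : ℕ) : ℤ) ∣ d := Int.gcd_dvd_right _ _
    refine ⟨c, hc, ?_⟩
    have hprod : (d : ℤ) ∣ ((m : ℤ) - m0) * (m + m0) := by
      have a1 : (d : ℤ) ∣ l ^ 2 + m ^ 2 := by exact_mod_cast h3 m hmS
      have a2 : (d : ℤ) ∣ l ^ 2 + m0 ^ 2 := by exact_mod_cast h3 m0 hm0
      have h := dvd_sub a1 a2
      have e1 : ((m : ℤ) - m0) * (m + m0) = (l ^ 2 + m ^ 2) - (l ^ 2 + m0 ^ 2) := by ring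
      rw [e1]; exact h
    obtain ⟨t, ht⟩ : ((e m : ℕ) : ℤ) ∣ (m : ℤ) - m0 := Int.gcd_dvd_left _ _
    have he : ((e m : ℕ) : ℤ) ≠ 0 := by
      intro h0; rw [h0, zero_mul] at hc; omega
    have hcop' : IsCoprime c t := by
      have hb := Int.gcd_eq_gcd_ab ((m : ℤ) - m0) d
      refine ⟨Int.gcdB ((m : ℤ) - m0) d, Int.gcdA ((m : ℤ) - m0) d, ?_⟩
      apply mul_left_cancel₀ he
      have hb' : ((e m : ℕ) : ℤ) = ((m : ℤ) - m0) * Int.gcdA ((m : ℤ) - m0) d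
        + d * Int.gcdB ((m : ℤ) - m0) d := hb
      generalize Int.gcdA ((m : ℤ) - m0) d = A at *
      generalize Int.gcdB ((m : ℤ) - m0) d = B at *
      linear_combination -hb' - A * ht - B * hc
    have : c ∣ t * (m + m0) := by
      rw [ht, mul_assoc] at hprod
      nth_rewrite 1 [hc] at hprod
      exact (mul_dvd_mul_iff_left he).1 hprod
    exact hcop'.dvd_of_dvd_mul_left this
  intro m hm m' hm'
  obtain ⟨p1, c, p2, p3⟩ := hdec m hm
  obtain ⟨q1, c', q2, q3⟩ := hdec m' hm'
  have hb0 : (b : ℤ) ≠ 0 := by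
    intro h0; rw [h0, zero_mul] at p2; omega
  have : c' = c := mul_left_cancel₀ hb0 (by rw [← q2, p2])
  subst this
  have r1 : (b : ℤ) ∣ (m : ℤ) - m' := by
    have h := dvd_sub p1 q1
    rwa [sub_sub_sub_cancel_right] at h
  have r2 : c' ∣ (m : ℤ) - m' := by
    have h := dvd_sub p3 q3
    rwa [add_sub_add_right_eq_sub] at h
  obtain ⟨u, v, huv⟩ := hcop
  have r3 : (d : ℤ) ∣ 2 * m0 * ((m : ℤ) - m') := by
    have s1 : (d : ℤ) ∣ ((m : ℤ) + m0) * (m - m') := by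
      rw [p2, mul_comm (b : ℤ)]; exact mul_dvd_mul p3 r1
    have s2 : (d : ℤ) ∣ ((m : ℤ) - m0) * (m - m') := by
      rw [p2]; exact mul_dvd_mul p1 r2
    have h := dvd_sub s1 s2
    have e1 : 2 * m0 * ((m : ℤ) - m') = ((m : ℤ) + m0) * (m - m') - ((m : ℤ) - m0) * (m - m') := by
      ring
    rw [e1]; exact h
  have : 2 * ((m : ℤ) - m') = u * (2 * m0 * (m - m')) + d * (v * (2 * (m - m'))) := by
    linear_combination (-(2 * ((m : ℤ) - m'))) * huv
  rw [this]
  exact dvd_add (r3.mul_left _) (dvd_mul_right _ _)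

lemma gse_triple (A : Finset ℕ) (G : ℕ → ℝ) :
    ∑ t ∈ A ×ˢ A ×ˢ A, G t.1 * (G t.2.1 * G t.2.2) = (∑ d ∈ A, G d) ^ 3 := by
  rw [Finset.sum_product]
  have h : ∀ a ∈ A, ∑ y ∈ A ×ˢ A, G a * (G y.1 * G y.2) = G a * (∑ d ∈ A, G d) ^ 2 := by
    intro a _
    rw [← Finset.mul_sum, Finset.sum_product, sq, Finset.sum_mul_sum]
  rw [Finset.sum_congr rfl h, ← Finset.sum_mul]
  ring

lemma gse_alg (A B C H a b c : ℝ) (ha : a ≠ 0) (hb : b ≠ 0) (hc : c ≠ 0) (n : ℝ)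
    (hn : n = a * b * c) :
    (A * B * C * (3 * (H / n))) * (32 * (A ^ 4 * B ^ 4 * C ^ 4)) =
      96 * H * (A ^ 5 / a * (B ^ 5 / b * (C ^ 5 / c))) := by
  subst hn
  field_simp
  ring

set_option maxHeartbeats 1000000 in
lemma gse_tau_sum (S : Finset ℕ) (l : ℕ) (x H : ℝ) (hx : 1 ≤ x) (hH : 1 ≤ H) (hHx : H ≤ x)
    (h4 : x ≤ H ^ 4) (h1 : ∀ m ∈ S, ∀ m' ∈ S, (m : ℝ) - m' ≤ H)
    (h2 : ∀ m ∈ S, Nat.gcd l m = 1)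
    (h3 : ∀ m ∈ S, 0 < l ^ 2 + m ^ 2 ∧ ((l ^ 2 + m ^ 2 : ℕ) : ℝ) ≤ x) :
    ∑ m ∈ S, ((l ^ 2 + m ^ 2).divisors.card : ℝ) ≤ 96 * H * (1 + Real.log x) ^ 96 := by
  set Y := ⌊H⌋₊ with hY
  have hYH : (Y : ℝ) ≤ H := Nat.floor_le (by linarith)
  set B := Finset.Icc 1 Y ×ˢ Finset.Icc 1 Y ×ˢ Finset.Icc 1 Y with hB
  set T := B.filter (fun t : ℕ × ℕ × ℕ => t.1 * t.2.1 * t.2.2 ≤ Y) with hT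
  set w : ℕ × ℕ × ℕ → ℝ := fun t => 32 * ((t.1.divisors.card : ℝ) ^ 4 *
    (t.2.1.divisors.card : ℝ) ^ 4 * (t.2.2.divisors.card : ℝ) ^ 4) with hw
  have hw0 : ∀ t, 0 ≤ w t := fun t => by positivity
  set G : ℕ → ℝ := fun d => (d.divisors.card : ℝ) ^ 5 / d with hG
  have hG0 : ∀ t, 0 ≤ G t := fun t => by positivity
  have step1 : ∀ m ∈ S, ((l ^ 2 + m ^ 2).divisors.card : ℝ) ≤
      ∑ t ∈ T, if t.1 * t.2.1 * t.2.2 ∣ l ^ 2 + m ^ 2 then w t else 0 := by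
    intro m hm
    obtain ⟨hp, hle⟩ := h3 m hm
    obtain ⟨a, b, c, k1, k2, k3⟩ := gse_small_div _ hp
    have habc : 0 < a * b * c := Nat.pos_of_dvd_of_pos k1 hp
    have hY' : a * b * c ≤ Y := by
      apply Nat.le_floor
      have : ((a * b * c : ℕ) : ℝ) ^ 4 ≤ H ^ 4 := by
        refine le_trans ?_ (hle.trans h4)
        exact_mod_cast k2
      exact le_of_pow_le_pow_left₀ (by norm_num) (by linarith) this
    have hab : 0 < a * b := Nat.pos_of_mul_pos_right habc
    have hc : 0 < c := Nat.pos_of_mul_pos_left habc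
    have ha : 0 < a := Nat.pos_of_mul_pos_right hab
    have hb : 0 < b := Nat.pos_of_mul_pos_left hab
    have hmem : (a, b, c) ∈ T := by
      simp only [hT, hB, Finset.mem_filter, Finset.mem_product, Finset.mem_Icc]
      refine ⟨⟨⟨ha, ?_⟩, ⟨hb, ?_⟩, hc, ?_⟩, hY'⟩
      · exact (Nat.le_of_dvd habc ⟨b * c, by ring⟩).trans hY'
      · exact (Nat.le_of_dvd habc ⟨a * c, by ring⟩).trans hY'
      · exact (Nat.le_of_dvd habc ⟨a * b, by ring⟩).trans hY'
    have := Finset.single_le_sum (f := fun t : ℕ × ℕ × ℕ =>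
      if t.1 * t.2.1 * t.2.2 ∣ l ^ 2 + m ^ 2 then w t else 0)
      (fun t _ => by split_ifs; exacts [hw0 t, le_rfl]) hmem
    refine le_trans ?_ this
    simp only [k1, if_true, hw]
    exact_mod_cast k3
  have step2 : ∀ t ∈ T, ∑ m ∈ S, (if t.1 * t.2.1 * t.2.2 ∣ l ^ 2 + m ^ 2 then w t else 0) ≤
      96 * H * (G t.1 * (G t.2.1 * G t.2.2)) := by
    rintro ⟨a, b, c⟩ ht
    simp only [hT, hB, Finset.mem_filter, Finset.mem_product, Finset.mem_Icc] at ht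
    obtain ⟨⟨⟨ha, _⟩, ⟨hb, _⟩, hc, _⟩, hle⟩ := ht
    have ha' : (0 : ℝ) < a := by exact_mod_cast ha
    have hb' : (0 : ℝ) < b := by exact_mod_cast hb
    have hc' : (0 : ℝ) < c := by exact_mod_cast hc
    simp only
    rw [← Finset.sum_filter, Finset.sum_const, nsmul_eq_mul]
    have habc : 0 < a * b * c := by positivity
    have hr := gse_root_count (S.filter (fun m => a * b * c ∣ l ^ 2 + m ^ 2)) l (a * b * c) habc H
      (by linarith) (fun m hm m' hm' => h1 m (Finset.mem_filter.1 hm).1 m'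
      (Finset.mem_filter.1 hm').1) (fun m hm => h2 m (Finset.mem_filter.1 hm).1)
      (fun m hm => (Finset.mem_filter.1 hm).2)
    have hdH : ((a * b * c : ℕ) : ℝ) ≤ H := le_trans (by exact_mod_cast hle) hYH
    have hpos : (0 : ℝ) < ((a * b * c : ℕ) : ℝ) := by exact_mod_cast habc
    have hone : 1 ≤ H / ((a * b * c : ℕ) : ℝ) := by rw [le_div_iff₀ hpos]; linarith
    have htau : ((a * b * c).divisors.card : ℝ) ≤ a.divisors.card * b.divisors.card *
        c.divisors.card := by
      have := (gse_card_div_mul_le (a * b) c).trans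
        (Nat.mul_le_mul_right _ (gse_card_div_mul_le a b))
      exact_mod_cast this
    calc _ ≤ (((a * b * c).divisors.card : ℝ) * (2 * H / ((a * b * c : ℕ) : ℝ) + 1)) * w (a, b, c) :=
          mul_le_mul_of_nonneg_right hr (hw0 _)
      _ ≤ ((a.divisors.card * b.divisors.card * c.divisors.card : ℝ) *
          (3 * (H / ((a * b * c : ℕ) : ℝ)))) * w (a, b, c) := by
          refine mul_le_mul_of_nonneg_right (mul_le_mul htau ?_ (by positivity) (by positivity))
            (hw0 _)
          rw [mul_div_assoc]; linarith
      _ = _ := by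
          exact gse_alg _ _ _ _ _ _ _ ha'.ne' hb'.ne' hc'.ne' _ (by push_cast; rfl)
  calc _ ≤ ∑ m ∈ S, ∑ t ∈ T, (if t.1 * t.2.1 * t.2.2 ∣ l ^ 2 + m ^ 2 then w t else 0) :=
        Finset.sum_le_sum step1
    _ = ∑ t ∈ T, ∑ m ∈ S, (if t.1 * t.2.1 * t.2.2 ∣ l ^ 2 + m ^ 2 then w t else 0) :=
        Finset.sum_comm
    _ ≤ ∑ t ∈ T, 96 * H * (G t.1 * (G t.2.1 * G t.2.2)) := Finset.sum_le_sum step2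
    _ ≤ ∑ t ∈ B, 96 * H * (G t.1 * (G t.2.1 * G t.2.2)) := by
        refine Finset.sum_le_sum_of_subset_of_nonneg (Finset.filter_subset _ _) fun t _ _ => ?_
        have := hG0 t.1; have := hG0 t.2.1; have := hG0 t.2.2
        positivity
    _ = 96 * H * (∑ d ∈ Finset.Icc 1 Y, G d) ^ 3 := by
        rw [← Finset.mul_sum, hB, gse_triple]
    _ ≤ 96 * H * ((1 + Real.log x) ^ (2 ^ 5)) ^ 3 := by
        exact mul_le_mul_of_nonneg_left (pow_le_pow_left₀ (Finset.sum_nonneg fun d _ => hG0 d)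
          (gse_sum_tau_log x hx Y 5 (hYH.trans hHx)) 3) (by linarith)
    _ = 96 * H * (1 + Real.log x) ^ (2 ^ 5 * 3) := by rw [← pow_mul]
    _ = _ := by rw [show 2 ^ 5 * 3 = 96 from rfl]

lemma gse_sum_inv_sqrt (N : ℕ) :
    ∑ k ∈ Finset.range N, 1 / Real.sqrt ((N : ℝ) - k) ≤ 2 * Real.sqrt N := by
  induction N with
  | zero => simp
  | succ N ih =>
    rw [Finset.sum_range_succ']
    have e : ∀ k ∈ Finset.range N, 1 / Real.sqrt (((N + 1 : ℕ) : ℝ) - ((k + 1 : ℕ) : ℝ)) =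
        1 / Real.sqrt ((N : ℝ) - k) := by
      intro k _; congr 2; push_cast; ring
    rw [Finset.sum_congr rfl e]
    have hs : 0 < Real.sqrt ((N : ℝ) + 1) := Real.sqrt_pos.2 (by positivity)
    have h1 := Real.sq_sqrt (show (0 : ℝ) ≤ N + 1 by positivity)
    have h2 := Real.sq_sqrt (show (0 : ℝ) ≤ N by positivity)
    have h3 : 1 / Real.sqrt ((N : ℝ) + 1) ≤ 2 * Real.sqrt (N + 1) - 2 * Real.sqrt N := by
      rw [div_le_iff₀ hs]
      nlinarith [sq_nonneg (Real.sqrt ((N : ℝ) + 1) - Real.sqrt N)]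
    push_cast
    rw [sub_zero]
    linarith

/-- the length of the interval of admissible `m` -/
noncomputable def gseH (κ x : ℝ) (r N k : ℕ) : ℝ :=
  if k = N then Real.sqrt (κ * x) else κ * x / Real.sqrt (x - (k : ℝ) ^ (2 * r))

lemma gse_gap (K : ℝ) (k r : ℕ) (hr : 1 ≤ r) (hk : (k : ℝ) ≤ K) :
    K ^ (2 * r - 1) * (K - k) ≤ K ^ (2 * r) - (k : ℝ) ^ (2 * r) := by
  obtain ⟨s, hs⟩ : ∃ s, 2 * r = s + 1 := ⟨2 * r - 1, by omega⟩
  rw [hs, Nat.add_sub_cancel]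
  have hk0 : (0 : ℝ) ≤ k := Nat.cast_nonneg k
  have : (k : ℝ) ^ s ≤ K ^ s := pow_le_pow_left₀ hk0 hk s
  rw [pow_succ, pow_succ]
  nlinarith

lemma gse_H_props (K κ : ℝ) (r k : ℕ) (hr : 1 ≤ r) (hK : 1 ≤ K) (hκ0 : 0 < κ) (hκ1 : κ ≤ 1)
    (hκ : 1 ≤ κ ^ 2 * K) (hk : k ≤ ⌊K⌋₊) :
    1 ≤ gseH κ (K ^ (2 * r)) r ⌊K⌋₊ k ∧ gseH κ (K ^ (2 * r)) r ⌊K⌋₊ k ≤ K ^ (2 * r) ∧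
    K ^ (2 * r) ≤ gseH κ (K ^ (2 * r)) r ⌊K⌋₊ k ^ 4 ∧
    (∀ m m' : ℕ, (1 - κ) * K ^ (2 * r) < (k : ℝ) ^ (2 * r) + (m' : ℝ) ^ 2 →
      (k : ℝ) ^ (2 * r) + (m' : ℝ) ^ 2 ≤ K ^ (2 * r) →
      (k : ℝ) ^ (2 * r) + (m : ℝ) ^ 2 ≤ K ^ (2 * r) →
      (m : ℝ) - m' ≤ gseH κ (K ^ (2 * r)) r ⌊K⌋₊ k) ∧
    gseH κ (K ^ (2 * r)) r ⌊K⌋₊ k ≤ (if k = ⌊K⌋₊ then κ * K ^ (r + 1) else 0) +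
      κ * K ^ r * Real.sqrt K * (1 / Real.sqrt ((⌊K⌋₊ : ℝ) - k)) := by
  have hNK : (⌊K⌋₊ : ℝ) ≤ K := Nat.floor_le (by linarith)
  have hgap := gse_gap K k r hr (le_trans (by exact_mod_cast hk) hNK)
  have hKx : K ^ 2 ≤ K ^ (2 * r) := pow_le_pow_right₀ hK (by omega)
  have hK2r1 : 1 ≤ K ^ (2 * r - 1) := one_le_pow₀ hK
  have hxe : K ^ (2 * r) = K ^ (2 * r - 1) * K := by rw [← pow_succ]; congr 1; omega
  have hxr : K ^ (2 * r) = (K ^ r) ^ 2 := by rw [← pow_mul]; congr 1; omega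
  have hxr2 : (K ^ (r + 1)) ^ 2 = K ^ (2 * r) * K ^ 2 := by rw [hxr]; ring
  have hKr : 1 ≤ K ^ r := one_le_pow₀ hK
  have hκ4 : 1 ≤ κ ^ 4 * K ^ (2 * r) := by
    calc (1 : ℝ) ≤ (κ ^ 2 * K) ^ 2 := one_le_pow₀ hκ
      _ = κ ^ 4 * K ^ 2 := by ring
      _ ≤ _ := by gcongr
  have hκ2 : 1 ≤ κ ^ 2 * K ^ (2 * r) := hκ.trans (by gcongr; nlinarith)
  have hkx : 0 ≤ (k : ℝ) ^ (2 * r) := by positivity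
  set x := K ^ (2 * r) with hx
  have hx1 : 1 ≤ x := by nlinarith
  set y := (k : ℝ) ^ (2 * r) with hy
  have main4 : ∀ h : ℝ, 0 ≤ h → x ≤ h ^ 4 → 1 ≤ h := by
    intro h h0 h1
    by_contra hlt
    push Not at hlt
    have : h ^ 4 < 1 := pow_lt_one₀ h0 hlt (by norm_num)
    linarith
  unfold gseH
  split_ifs with hkN
  · have hs := Real.sq_sqrt (show 0 ≤ κ * x by positivity)
    have hs0 := Real.sqrt_nonneg (κ * x)
    have h4 : x ≤ Real.sqrt (κ * x) ^ 4 := by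
      have : Real.sqrt (κ * x) ^ 4 = (κ ^ 2 * x) * x := by
        rw [show (4 : ℕ) = 2 * 2 from rfl, pow_mul, hs]; ring
      rw [this]; nlinarith
    refine ⟨main4 _ hs0 h4, ?_, h4, ?_, ?_⟩
    · apply Real.sqrt_le_iff.2 ⟨by linarith, by nlinarith⟩
    · intro m m' a1 a2 a3
      have b3 : (0 : ℝ) ≤ m' := Nat.cast_nonneg _
      rcases le_total (m : ℝ) m' with h | h
      · linarith
      · apply Real.le_sqrt_of_sq_le
        nlinarith
    · rw [hkN]
      simp only [sub_self, Real.sqrt_zero, div_zero, mul_zero, add_zero]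
      apply Real.sqrt_le_iff.2 ⟨by positivity, ?_⟩
      rw [mul_pow, hxr2]
      have : 1 ≤ κ * K ^ 2 := by nlinarith
      nlinarith [mul_pos hκ0 (show 0 < x by linarith)]
  · have hlt : k + 1 ≤ ⌊K⌋₊ := by omega
    have hlt' : (k : ℝ) + 1 ≤ ⌊K⌋₊ := by exact_mod_cast hlt
    set j := (⌊K⌋₊ : ℝ) - k with hj
    have hj1 : 1 ≤ j := by linarith
    have hgap2 : K ^ (2 * r - 1) * j ≤ x - y := le_trans (by gcongr; linarith) hgap
    have hM1 : 1 ≤ x - y := by nlinarith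
    have hs := Real.sq_sqrt (show 0 ≤ x - y by linarith)
    have hs1 : 1 ≤ Real.sqrt (x - y) := Real.one_le_sqrt.2 hM1
    set M := Real.sqrt (x - y) with hM
    have hM0 : 0 < M := by linarith
    have h4 : x ≤ (κ * x / M) ^ 4 := by
      rw [div_pow, le_div_iff₀ (by positivity)]
      have e1 : M ^ 4 = (x - y) ^ 2 := by rw [← hs]; ring
      rw [e1]
      have e2 : (x - y) ^ 2 ≤ x ^ 2 := by gcongr; linarith
      calc x * (x - y) ^ 2 ≤ x * x ^ 2 := by gcongr
        _ ≤ (κ ^ 4 * x) * (x * x ^ 2) := le_mul_of_one_le_left (by positivity) hκ4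
        _ = _ := by ring
    refine ⟨main4 _ (by positivity) h4, ?_, h4, ?_, ?_⟩
    · rw [div_le_iff₀ hM0]; nlinarith
    · intro m m' a1 a2 a3
      rw [le_div_iff₀ hM0]
      have b1 : (m : ℝ) ≤ M := Real.le_sqrt_of_sq_le (by linarith)
      have b2 : (m' : ℝ) ≤ M := Real.le_sqrt_of_sq_le (by linarith)
      have b3 : (0 : ℝ) ≤ m' := Nat.cast_nonneg _
      have c1 := mul_le_mul_of_nonneg_right b1 hM0.le
      have c2 := mul_le_mul_of_nonneg_right b2 b3
      have c3 : ((m : ℝ) - m') * M = m * M - M * m' := by ring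
      have c4 : M * M = x - y := by rw [← hs]; ring
      have c5 : (m' : ℝ) * m' = (m' : ℝ) ^ 2 := by ring
      linarith
    · rw [zero_add, mul_one_div]
      have hsj : 0 < Real.sqrt j := Real.sqrt_pos.2 (by linarith)
      rw [div_le_div_iff₀ hM0 hsj, mul_assoc, mul_assoc, mul_assoc]
      refine mul_le_mul_of_nonneg_left ?_ hκ0.le
      refine le_of_pow_le_pow_left₀ (two_ne_zero) (by positivity) ?_
      rw [mul_pow, mul_pow, mul_pow, Real.sq_sqrt (by linarith), Real.sq_sqrt (by linarith), hs,
        ← hxr]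
      calc x ^ 2 * j = x * (K * (K ^ (2 * r - 1) * j)) := by rw [sq]; nth_rewrite 2 [hxe]; ring
        _ ≤ x * (K * (x - y)) := by gcongr

lemma gse_H_sum (K κ : ℝ) (r : ℕ) (hr : 1 ≤ r) (hK : 1 ≤ K) (hκ0 : 0 < κ) (hκ1 : κ ≤ 1)
    (hκ : 1 ≤ κ ^ 2 * K) :
    ∑ k ∈ Finset.Icc 1 ⌊K⌋₊, gseH κ (K ^ (2 * r)) r ⌊K⌋₊ k ≤ 3 * κ * K ^ (r + 1) := by
  have hNK : (⌊K⌋₊ : ℝ) ≤ K := Nat.floor_le (by linarith)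
  refine (Finset.sum_le_sum fun k hk => (gse_H_props K κ r k hr hK hκ0 hκ1 hκ
    (Finset.mem_Icc.1 hk).2).2.2.2.2).trans ?_
  rw [Finset.sum_add_distrib, ← Finset.mul_sum, Finset.sum_ite_eq']
  have h1 : ∑ k ∈ Finset.Icc 1 ⌊K⌋₊, 1 / Real.sqrt ((⌊K⌋₊ : ℝ) - k) ≤ 2 * Real.sqrt K := by
    calc _ ≤ ∑ k ∈ Finset.range (⌊K⌋₊ + 1), 1 / Real.sqrt ((⌊K⌋₊ : ℝ) - k) := by
          refine Finset.sum_le_sum_of_subset_of_nonneg ?_ fun _ _ _ => by positivity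
          intro k hk
          rw [Finset.mem_Icc] at hk
          rw [Finset.mem_range]; omega
      _ = ∑ k ∈ Finset.range ⌊K⌋₊, 1 / Real.sqrt ((⌊K⌋₊ : ℝ) - k) := by
          rw [Finset.sum_range_succ]; simp
      _ ≤ _ := gse_sum_inv_sqrt _
      _ ≤ _ := by gcongr
  have h2 : κ * K ^ r * Real.sqrt K * ∑ k ∈ Finset.Icc 1 ⌊K⌋₊, 1 / Real.sqrt ((⌊K⌋₊ : ℝ) - k) ≤
      2 * κ * K ^ (r + 1) := by
    calc _ ≤ κ * K ^ r * Real.sqrt K * (2 * Real.sqrt K) := by gcongr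
      _ = 2 * κ * K ^ r * (Real.sqrt K * Real.sqrt K) := by ring
      _ = _ := by rw [Real.mul_self_sqrt (by linarith)]; ring
  have h3 : (if ⌊K⌋₊ ∈ Finset.Icc 1 ⌊K⌋₊ then κ * K ^ (r + 1) else 0) ≤ κ * K ^ (r + 1) := by
    split_ifs
    · exact le_rfl
    · positivity
  linarith

lemma gse_pairs (r : ℕ) (hr : 1 ≤ r) (K κ : ℝ) (hK : 1 ≤ K) (hκ0 : 0 < κ) (hκ1 : κ ≤ 1)
    (hκ : 1 ≤ κ ^ 2 * K) (X : ℕ) :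
    ∑ p ∈ (Finset.Icc 1 ⌊K⌋₊ ×ˢ Finset.Icc 1 X).filter (fun p : ℕ × ℕ =>
      Nat.gcd (p.1 ^ r) p.2 = 1 ∧ (1 - κ) * K ^ (2 * r) < (((p.1 ^ r) ^ 2 + p.2 ^ 2 : ℕ) : ℝ) ∧
      (((p.1 ^ r) ^ 2 + p.2 ^ 2 : ℕ) : ℝ) ≤ K ^ (2 * r)),
      (((p.1 ^ r) ^ 2 + p.2 ^ 2).divisors.card : ℝ) ≤
    288 * κ * K ^ (r + 1) * (1 + Real.log (K ^ (2 * r))) ^ 96 := by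
  rw [Finset.sum_filter, Finset.sum_product]
  have hx1 : 1 ≤ K ^ (2 * r) := one_le_pow₀ hK
  have hl0 : 0 ≤ Real.log (K ^ (2 * r)) := Real.log_nonneg hx1
  have key : ∀ k ∈ Finset.Icc 1 ⌊K⌋₊, (∑ m ∈ Finset.Icc 1 X, if
      (Nat.gcd (k ^ r) m = 1 ∧ (1 - κ) * K ^ (2 * r) < (((k ^ r) ^ 2 + m ^ 2 : ℕ) : ℝ) ∧
      (((k ^ r) ^ 2 + m ^ 2 : ℕ) : ℝ) ≤ K ^ (2 * r)) then
      (((k ^ r) ^ 2 + m ^ 2).divisors.card : ℝ) else 0) ≤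
      gseH κ (K ^ (2 * r)) r ⌊K⌋₊ k * (96 * (1 + Real.log (K ^ (2 * r))) ^ 96) := by
    intro k hk
    rw [Finset.mem_Icc] at hk
    obtain ⟨p1, p2, p3, p4, _⟩ := gse_H_props K κ r k hr hK hκ0 hκ1 hκ hk.2
    have hkr : (((k ^ r : ℕ) : ℝ)) ^ 2 = (k : ℝ) ^ (2 * r) := by
      rw [Nat.cast_pow, ← pow_mul]; congr 1; ring
    rw [← Finset.sum_filter]
    refine (gse_tau_sum _ (k ^ r) (K ^ (2 * r)) (gseH κ (K ^ (2 * r)) r ⌊K⌋₊ k) hx1 p1 p2 p3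
      ?_ ?_ ?_).trans (le_of_eq (by ring))
    · intro m hm m' hm'
      obtain ⟨_, _, a2, a3⟩ := Finset.mem_filter.1 hm
      obtain ⟨_, _, b2, b3⟩ := Finset.mem_filter.1 hm'
      rw [Nat.cast_add, Nat.cast_pow (k ^ r) 2, Nat.cast_pow _ 2, hkr] at a2 a3 b2 b3
      exact p4 m m' b2 b3 a3
    · intro m hm
      exact (Finset.mem_filter.1 hm).2.1
    · intro m hm
      obtain ⟨a0, _, a2, a3⟩ := Finset.mem_filter.1 hm
      have : 1 ≤ m := (Finset.mem_Icc.1 a0).1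
      exact ⟨by positivity, a3⟩
  refine (Finset.sum_le_sum key).trans ?_
  rw [← Finset.sum_mul]
  calc _ ≤ 3 * κ * K ^ (r + 1) * (96 * (1 + Real.log (K ^ (2 * r))) ^ 96) := by
        gcongr
        exact gse_H_sum K κ r hr hK hκ0 hκ1 hκ
    _ = _ := by ring

lemma gse_a_bound (r : ℕ) (hr : 1 ≤ r) (K : ℝ) (hK : 1 ≤ K) (γ : ℕ → ℂ) (hγ : ∀ l, ‖γ l‖ ≤ 1)
    (hγ0 : ∀ l, (¬ ∃ k : ℕ, 1 ≤ k ∧ l = k ^ r) → γ l = 0) (n X : ℕ) (hnX : n ≤ X)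
    (hn : (n : ℝ) ≤ K ^ (2 * r)) :
    ‖∑ lm ∈ ((Finset.Icc 1 n ×ˢ Finset.Icc 1 n).filter
        (fun lm => lm.1 ^ 2 + lm.2 ^ 2 = n ∧ Nat.gcd lm.1 lm.2 = 1)), γ lm.1‖ ≤
    (((Finset.Icc 1 ⌊K⌋₊ ×ˢ Finset.Icc 1 X).filter (fun p : ℕ × ℕ =>
      (p.1 ^ r) ^ 2 + p.2 ^ 2 = n ∧ Nat.gcd (p.1 ^ r) p.2 = 1)).card : ℝ) := by
  classical
  set F := (Finset.Icc 1 n ×ˢ Finset.Icc 1 n).filter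
        (fun lm : ℕ × ℕ => lm.1 ^ 2 + lm.2 ^ 2 = n ∧ Nat.gcd lm.1 lm.2 = 1) with hF
  set P := (Finset.Icc 1 ⌊K⌋₊ ×ˢ Finset.Icc 1 X).filter (fun p : ℕ × ℕ =>
      (p.1 ^ r) ^ 2 + p.2 ^ 2 = n ∧ Nat.gcd (p.1 ^ r) p.2 = 1) with hP
  have h1 : ‖∑ lm ∈ F, γ lm.1‖ ≤ ((F.filter (fun lm => ∃ k : ℕ, 1 ≤ k ∧ lm.1 = k ^ r)).card : ℝ) := by
    refine (norm_sum_le _ _).trans ?_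
    rw [Finset.card_filter]
    push_cast
    refine Finset.sum_le_sum fun lm _ => ?_
    split_ifs with h
    · exact hγ _
    · rw [hγ0 _ h, norm_zero]
  refine h1.trans ?_
  have h2 : F.filter (fun lm => ∃ k : ℕ, 1 ≤ k ∧ lm.1 = k ^ r) ⊆
      P.image (fun p => (p.1 ^ r, p.2)) := by
    rintro ⟨l, m⟩ h
    simp only [hF, Finset.mem_filter, Finset.mem_product, Finset.mem_Icc] at h
    obtain ⟨⟨⟨_, hm1, hm2⟩, hs, hg⟩, k, hk1, rfl⟩ := h
    rw [Finset.mem_image]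
    refine ⟨(k, m), ?_, rfl⟩
    simp only [hP, Finset.mem_filter, Finset.mem_product, Finset.mem_Icc]
    refine ⟨⟨⟨hk1, ?_⟩, hm1, hm2.trans hnX⟩, hs, hg⟩
    apply Nat.le_floor
    refine le_of_pow_le_pow_left₀ (n := 2 * r) (by omega) (by linarith) (le_trans ?_ hn)
    have : k ^ (2 * r) ≤ n := by
      rw [mul_comm, pow_mul, ← hs]; omega
    exact_mod_cast this
  exact_mod_cast (Finset.card_le_card h2).trans Finset.card_image_le

theorem gaussian_smoothing_error (r : ℕ) (hr : 1 ≤ r) :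
    ∃ C : ℝ, 0 < C ∧
    ∀ x : ℝ, 2 ≤ x →
    ∀ κ : ℝ, x ^ (-(1 : ℝ) / (4 * r)) ≤ κ → κ ≤ 1 →
    ∀ D : ℝ, Real.sqrt x ≤ D → D ≤ x ^ (((r : ℝ) + 1) / (2 * r)) →
    ∀ γ : ℕ → ℂ, (∀ l, ‖γ l‖ ≤ 1) →
    (∀ l, (¬ ∃ k : ℕ, 1 ≤ k ∧ l = k ^ r) → γ l = 0) →
    ∀ f : ℝ → ℝ, ContDiff ℝ (⊤ : ℕ∞) f →
    (∀ t : ℝ, 0 ≤ f t ∧ f t ≤ 1) →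
    (∀ t : ℝ, 0 ≤ t → t ≤ (1 - κ) * x → f t = 1) →
    (∀ t : ℝ, x ≤ t → f t = 0) →
    ∀ a : ℕ → ℂ,
    (∀ n : ℕ, a n = ∑ lm ∈ ((Finset.Icc 1 n ×ˢ Finset.Icc 1 n).filter
        (fun lm => lm.1 ^ 2 + lm.2 ^ 2 = n ∧ Nat.gcd lm.1 lm.2 = 1)), γ lm.1) →
    ∑ d ∈ Finset.Icc 1 ⌊D⌋₊,
      ‖(∑ n ∈ (Finset.Icc 1 ⌊x⌋₊).filter (fun n => d ∣ n), a n) -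
        (∑ n ∈ (Finset.Icc 1 ⌊x⌋₊).filter (fun n => d ∣ n), a n * (f n : ℂ))‖
      ≤ C * κ * x ^ (((r : ℝ) + 1) / (2 * r)) * Real.log x ^ (128 : ℕ) := by
  have hr0 : (0 : ℝ) < r := by exact_mod_cast hr
  refine ⟨288 * 3 ^ 96 * 2 ^ 32, by positivity, ?_⟩
  intro x hx κ hκl hκ1 D _ _ γ hγ hγ0 f _ hf01 hf1 _ a ha
  have hx0 : (0 : ℝ) < x := by linarith
  set K : ℝ := x ^ ((1 : ℝ) / (2 * r)) with hKdef
  have hK : 1 ≤ K := Real.one_le_rpow (by linarith) (by positivity)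
  have hxK : K ^ (2 * r) = x := by
    rw [hKdef, ← Real.rpow_natCast, ← Real.rpow_mul hx0.le]
    push_cast
    rw [one_div_mul_cancel (by positivity), Real.rpow_one]
  have hpow : x ^ (((r : ℝ) + 1) / (2 * r)) = K ^ (r + 1) := by
    rw [hKdef, ← Real.rpow_natCast, ← Real.rpow_mul hx0.le]
    push_cast
    congr 1; ring
  have hκ0 : 0 < κ := lt_of_lt_of_le (Real.rpow_pos_of_pos hx0 _) hκl
  have hκ : 1 ≤ κ ^ 2 * K := by
    have h1 : (x ^ (-(1 : ℝ) / (4 * r))) ^ 2 * K = 1 := by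
      rw [hKdef, ← Real.rpow_natCast, ← Real.rpow_mul hx0.le, ← Real.rpow_add hx0]
      have : -(1 : ℝ) / (4 * r) * ((2 : ℕ) : ℝ) + 1 / (2 * r) = 0 := by
        push_cast; field_simp; ring
      rw [this, Real.rpow_zero]
    rw [← h1]
    have := (Real.rpow_pos_of_pos hx0 (-(1 : ℝ) / (4 * r))).le
    gcongr
  rw [hpow]
  set X := ⌊x⌋₊ with hX
  have hXx : (X : ℝ) ≤ x := Nat.floor_le hx0.le
  set b : ℕ → ℝ := fun n => if (1 - κ) * x < n then ‖a n‖ else 0 with hb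
  have hb0 : ∀ n, 0 ≤ b n := fun n => by simp only [hb]; split_ifs <;> positivity
  have step1 : ∀ d ∈ Finset.Icc 1 ⌊D⌋₊,
      ‖(∑ n ∈ (Finset.Icc 1 X).filter (fun n => d ∣ n), a n) -
        (∑ n ∈ (Finset.Icc 1 X).filter (fun n => d ∣ n), a n * (f n : ℂ))‖ ≤
      ∑ n ∈ Finset.Icc 1 X, if d ∣ n then b n else 0 := by
    intro d _
    rw [← Finset.sum_sub_distrib, ← Finset.sum_filter]
    refine (norm_sum_le _ _).trans (Finset.sum_le_sum fun n _ => ?_)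
    have e : a n - a n * (f n : ℂ) = a n * ((1 - f n : ℝ) : ℂ) := by push_cast; ring
    rw [e, norm_mul, Complex.norm_real, Real.norm_eq_abs]
    simp only [hb]
    split_ifs with h
    · refine mul_le_of_le_one_right (norm_nonneg _) ?_
      obtain ⟨f1, f2⟩ := hf01 n
      rw [abs_le]; constructor <;> linarith
    · rw [hf1 n (Nat.cast_nonneg n) (not_lt.1 h)]; simp
  set φ : ℕ × ℕ → ℕ := fun p => (p.1 ^ r) ^ 2 + p.2 ^ 2 with hφ
  set P := (Finset.Icc 1 ⌊K⌋₊ ×ˢ Finset.Icc 1 X).filter (fun p : ℕ × ℕ =>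
      Nat.gcd (p.1 ^ r) p.2 = 1 ∧ (1 - κ) * K ^ (2 * r) < (((p.1 ^ r) ^ 2 + p.2 ^ 2 : ℕ) : ℝ) ∧
      (((p.1 ^ r) ^ 2 + p.2 ^ 2 : ℕ) : ℝ) ≤ K ^ (2 * r)) with hP
  have step2 : ∀ n ∈ Finset.Icc 1 X, (∑ d ∈ Finset.Icc 1 ⌊D⌋₊, if d ∣ n then b n else 0) ≤
      ∑ p ∈ P with φ p = n, ((φ p).divisors.card : ℝ) := by
    intro n hn
    rw [Finset.mem_Icc] at hn
    have hnx : (n : ℝ) ≤ x := le_trans (by exact_mod_cast hn.2) hXx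
    rw [← Finset.sum_filter, Finset.sum_const, nsmul_eq_mul]
    have c1 : ((Finset.Icc 1 ⌊D⌋₊).filter (fun d => d ∣ n)).card ≤ n.divisors.card := by
      refine Finset.card_le_card fun d hd => ?_
      rw [Nat.mem_divisors]
      exact ⟨(Finset.mem_filter.1 hd).2, by omega⟩
    have c2 : ∑ p ∈ P with φ p = n, ((φ p).divisors.card : ℝ) =
        n.divisors.card * ((P.filter (fun p => φ p = n)).card : ℝ) := by
      rw [Finset.sum_congr rfl (g := fun _ => (n.divisors.card : ℝ))
        (fun p hp => by rw [(Finset.mem_filter.1 hp).2]), Finset.sum_const, nsmul_eq_mul, mul_comm]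
    rw [c2]
    refine mul_le_mul (by exact_mod_cast c1) ?_ (hb0 n) (by positivity)
    simp only [hb]
    split_ifs with h
    · rw [ha n]
      refine (gse_a_bound r hr K hK γ hγ hγ0 n X hn.2 (by rw [hxK]; exact hnx)).trans ?_
      refine Nat.cast_le.2 (Finset.card_le_card fun p hp => ?_)
      obtain ⟨q1, q2, q3⟩ := Finset.mem_filter.1 hp
      refine Finset.mem_filter.2 ⟨Finset.mem_filter.2 ⟨q1, q3, ?_, ?_⟩, q2⟩
      · rw [q2, hxK]; exact h
      · rw [q2, hxK]; exact hnx
    · positivity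
  have hlog : 1 + Real.log x ≤ 3 * Real.log x := by
    have := Real.log_two_gt_d9
    have := Real.log_le_log (by norm_num) hx
    linarith
  have hlog2 : 1 ≤ 2 * Real.log x := by linarith
  have hlog0 : 0 ≤ Real.log x := by linarith
  calc _ ≤ ∑ d ∈ Finset.Icc 1 ⌊D⌋₊, ∑ n ∈ Finset.Icc 1 X, (if d ∣ n then b n else 0) :=
        Finset.sum_le_sum step1
    _ = ∑ n ∈ Finset.Icc 1 X, ∑ d ∈ Finset.Icc 1 ⌊D⌋₊, (if d ∣ n then b n else 0) :=
        Finset.sum_comm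
    _ ≤ ∑ n ∈ Finset.Icc 1 X, ∑ p ∈ P with φ p = n, ((φ p).divisors.card : ℝ) :=
        Finset.sum_le_sum step2
    _ ≤ ∑ p ∈ P, ((φ p).divisors.card : ℝ) :=
        Finset.sum_fiberwise_le_sum_of_sum_fiber_nonneg
          (fun _ _ => Finset.sum_nonneg fun _ _ => by positivity)
    _ ≤ 288 * κ * K ^ (r + 1) * (1 + Real.log (K ^ (2 * r))) ^ 96 :=
        gse_pairs r hr K κ hK hκ0 hκ1 hκ X
    _ = 288 * κ * K ^ (r + 1) * (1 + Real.log x) ^ 96 := by rw [hxK]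
    _ ≤ 288 * κ * K ^ (r + 1) * ((3 * Real.log x) ^ 96 * (2 * Real.log x) ^ 32) := by
        have h1 : (1 + Real.log x) ^ 96 ≤ (3 * Real.log x) ^ 96 := by gcongr
        have h2 : 1 ≤ (2 * Real.log x) ^ 32 := one_le_pow₀ hlog2
        gcongr
        exact h1.trans (le_mul_of_one_le_right (by positivity) h2)
    _ = _ := by rw [mul_pow, mul_pow]; ring
end
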